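/- For integers i ≥ 1, j ≥ 0 with i + j = k, the highest-order face basis function φ_{ij} := −∇u_{i+1} × ∇v_{(i+1)(j+1)} on the reference tetrahedron is L²-orthogonal to all vector-valued polynomials of degree at most k−2: for every polynomial map q : ℝ³ → ℝ³ whose components have total degree ≤ k−2 one has ∫_{T̂₃} φ_{ij}(x,y,z) · q(x,y,z) d(x,y,z) = 0. -/

import Mathlib

open MeasureTheory

/-- Jacobi polynomial with parameters `(α, 0)`, via the Rodrigues formula. -/
noncomputable def jacobiP (α : ℝ) (n : ℕ) (x : ℝ) : ℝ :=
  1 / (2 ^ n * (n.factorial : ℝ) * (1 - x) ^ α) *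
    iteratedDeriv n (fun t : ℝ => (1 - t) ^ α * (t ^ 2 - 1) ^ n) x

/-- Integrated Jacobi polynomial `p̂_n^α`. -/
noncomputable def jacobiPhat (α : ℝ) (n : ℕ) (x : ℝ) : ℝ :=
  if n = 0 then 1 else ∫ ξ in (-1 : ℝ)..x, jacobiP α (n - 1) ξ

/-- Partial derivative in the first coordinate. -/
noncomputable def pdx (f : ℝ × ℝ × ℝ → ℝ) (p : ℝ × ℝ × ℝ) : ℝ :=
  deriv (fun x => f (x, p.2.1, p.2.2)) p.1

/-- Partial derivative in the second coordinate. -/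
noncomputable def pdy (f : ℝ × ℝ × ℝ → ℝ) (p : ℝ × ℝ × ℝ) : ℝ :=
  deriv (fun y => f (p.1, y, p.2.2)) p.2.1

/-- Partial derivative in the third coordinate. -/
noncomputable def pdz (f : ℝ × ℝ × ℝ → ℝ) (p : ℝ × ℝ × ℝ) : ℝ :=
  deriv (fun z => f (p.1, p.2.1, z)) p.2.2

/-- Gradient of a scalar field on `ℝ³`. -/
noncomputable def grad3 (f : ℝ × ℝ × ℝ → ℝ) (p : ℝ × ℝ × ℝ) : ℝ × ℝ × ℝ :=
  (pdx f p, pdy f p, pdz f p)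

/-- Cross product on `ℝ³`. -/
noncomputable def cross3 (a b : ℝ × ℝ × ℝ) : ℝ × ℝ × ℝ :=
  (a.2.1 * b.2.2 - a.2.2 * b.2.1, a.2.2 * b.1 - a.1 * b.2.2, a.1 * b.2.1 - a.2.1 * b.1)

/-- Euclidean dot product on `ℝ³`. -/
noncomputable def dot3 (a b : ℝ × ℝ × ℝ) : ℝ :=
  a.1 * b.1 + a.2.1 * b.2.1 + a.2.2 * b.2.2

/-- The scalar field `u_i(x,y,z) = p̂_i^0(x/(1-y-z)) (1-y-z)^i`. -/
noncomputable def uFun (i : ℕ) (p : ℝ × ℝ × ℝ) : ℝ :=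
  jacobiPhat 0 i (p.1 / (1 - p.2.1 - p.2.2)) * (1 - p.2.1 - p.2.2) ^ i

/-- The scalar field `v_{ij}(x,y,z) = p̂_j^{2i-1}((2y+z-1)/(1-z)) (1-z)^j`. -/
noncomputable def vFun (i j : ℕ) (p : ℝ × ℝ × ℝ) : ℝ :=
  jacobiPhat (2 * (i : ℝ) - 1) j ((2 * p.2.1 + p.2.2 - 1) / (1 - p.2.2)) * (1 - p.2.2) ^ j

/-- The face basis function `φ_{ij} = -∇u_{i+1} × ∇v_{(i+1)(j+1)}` (for `i ≥ 1`). -/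
noncomputable def phiFace (i j : ℕ) (p : ℝ × ℝ × ℝ) : ℝ × ℝ × ℝ :=
  -cross3 (grad3 (uFun (i + 1)) p) (grad3 (vFun (i + 1) (j + 1)) p)

/-- The reference tetrahedron, the convex hull of
`(-1,0,0)`, `(1,0,0)`, `(0,1,0)`, `(0,0,1)`. -/
def refTet : Set (ℝ × ℝ × ℝ) :=
  {p | 0 ≤ p.2.2 ∧ p.2.2 ≤ 1 ∧ 0 ≤ p.2.1 ∧ p.2.1 ≤ 1 - p.2.2 ∧ |p.1| ≤ 1 - p.2.1 - p.2.2}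

/-!
In the collapsed coordinates `(x / (1 - y - z), (2 y + z - 1) / (1 - z), z)` every component of
`φ_{ij}` is, up to a power of `1 - y - z`, a product `f · g · h` of functions of one variable, and
so is its product with a monomial `x^l y^m z^n`. The integral over the tetrahedron is then the
product of `∫ t^l f`, of `∫ (1 + t)^m g (1 - t)^(i + l + 1)` and of an integral in `z`.

The factors `f` and `g` are combinations of Jacobi polynomials and their antiderivatives, so
Rodrigues' formula and integration by parts make `∫ f (1 - t)^e` and `∫ g (1 - t)^e` vanish for
`e` in explicit ranges. If `l` is small, the `f`-integral vanishes; if `l` is large, the power of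
`1 - t` contributed by the collapsed coordinates brings the `g`-integral into its range.
-/

open Polynomial Set

section Rodrigues

theorem iteratedDeriv_polynomial_eval (n : ℕ) (p : ℝ[X]) :
    iteratedDeriv n (fun x => p.eval x) = fun x => (derivative^[n] p).eval x := by
  induction n generalizing p with
  | zero => simp
  | succ n ih =>
    have deriv_eval : deriv (fun x => p.eval x) = fun x => (derivative p).eval x :=
      funext fun x => p.deriv
    rw [iteratedDeriv_succ', deriv_eval, ih, Function.iterate_succ_apply]

theorem intervalIntegral_iterate_derivative_mul (n : ℕ) {a b : ℝ} {p : ℝ[X]}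
    (ha : (X - C a) ^ n ∣ p) (hb : (X - C b) ^ n ∣ p) (r : ℝ[X]) :
    ∫ x in a..b, (derivative^[n] p).eval x * r.eval x =
      (-1) ^ n * ∫ x in a..b, p.eval x * (derivative^[n] r).eval x := by
  induction n generalizing p with
  | zero => simp
  | succ n ih =>
    have eval_eq_zero {c : ℝ} (hc : (X - C c) ^ (n + 1) ∣ p) : p.eval c = 0 :=
      dvd_iff_isRoot.mp ((dvd_pow_self _ n.succ_ne_zero).trans hc)
    have by_parts := intervalIntegral.integral_deriv_mul_eq_sub
      (fun x _ => p.hasDerivAt x) (fun x _ => (derivative^[n] r).hasDerivAt x)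
      ((derivative p).continuous.intervalIntegrable a b)
      ((derivative (derivative^[n] r)).continuous.intervalIntegrable a b)
    rw [intervalIntegral.integral_add (Continuous.intervalIntegrable (by fun_prop) _ _)
      (Continuous.intervalIntegrable (by fun_prop) _ _), eval_eq_zero ha,
      eval_eq_zero hb] at by_parts
    have dvd_derivative {c : ℝ} (hc : (X - C c) ^ (n + 1) ∣ p) : (X - C c) ^ n ∣ derivative p := by
      simpa only [Nat.add_sub_cancel] using pow_sub_one_dvd_derivative_of_pow_dvd hc
    rw [Function.iterate_succ_apply, ih (dvd_derivative ha) (dvd_derivative hb),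
      Function.iterate_succ_apply', pow_succ]
    linear_combination (-1) ^ n * by_parts

/-- The Jacobi polynomial `p_n^m` with natural first parameter, as an element of `ℝ[X]`. The
quotient in Rodrigues' formula is exact, see `one_sub_X_pow_mul_jacobiPoly`. -/
noncomputable def jacobiPoly (m n : ℕ) : ℝ[X] :=
  C (1 / (2 ^ n * (n.factorial : ℝ))) *
    (derivative^[n] ((1 - X) ^ m * (X ^ 2 - 1) ^ n) / (1 - X) ^ m)

theorem one_sub_X_ne_zero : (1 - X : ℝ[X]) ≠ 0 := by
  rw [← neg_ne_zero, neg_sub]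
  exact X_sub_C_ne_zero 1

theorem one_sub_X_pow_mul_jacobiPoly (m n : ℕ) :
    (1 - X) ^ m * jacobiPoly m n =
      C (1 / (2 ^ n * (n.factorial : ℝ))) * derivative^[n] ((1 - X) ^ m * (X ^ 2 - 1) ^ n) := by
  have one_sub_X_dvd : (1 - X : ℝ[X]) ∣ X ^ 2 - 1 := ⟨-(1 + X), by ring⟩
  have pow_dvd : (1 - X : ℝ[X]) ^ (m + n) ∣ (1 - X) ^ m * (X ^ 2 - 1) ^ n := by
    rw [pow_add]
    exact mul_dvd_mul_left _ (pow_dvd_pow_of_dvd one_sub_X_dvd n)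
  have pow_dvd_derivative := pow_sub_dvd_iterate_derivative_of_pow_dvd n pow_dvd
  rw [Nat.add_sub_cancel] at pow_dvd_derivative
  rw [jacobiPoly, mul_left_comm, EuclideanDomain.mul_div_cancel'
    (pow_ne_zero m one_sub_X_ne_zero) pow_dvd_derivative]

theorem jacobiP_natCast_eq_eval (m n : ℕ) {x : ℝ} (hx : x ≠ 1) :
    jacobiP m n x = (jacobiPoly m n).eval x := by
  have weight_eq : (fun t : ℝ => (1 - t) ^ (m : ℝ) * (t ^ 2 - 1) ^ n) =
      fun t => ((1 - X) ^ m * (X ^ 2 - 1) ^ n : ℝ[X]).eval t := by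
    funext t
    simp [Real.rpow_natCast]
  have rodrigues := congrArg (eval x) (one_sub_X_pow_mul_jacobiPoly m n)
  simp only [eval_mul, eval_pow, eval_sub, eval_one, eval_X, eval_C] at rodrigues
  have weight_ne_zero : (1 - x) ^ m ≠ 0 := pow_ne_zero m (sub_ne_zero.mpr hx.symm)
  rw [jacobiP, weight_eq, iteratedDeriv_polynomial_eval, Real.rpow_natCast,
    ← mul_right_inj' weight_ne_zero, rodrigues]
  field_simp

/-- At `x = 1` the function `jacobiP` takes a junk value, which the integral does not see. -/
theorem jacobiPhat_natCast_succ (m n : ℕ) (x : ℝ) :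
    jacobiPhat m (n + 1) x = ∫ ξ in (-1 : ℝ)..x, (jacobiPoly m n).eval ξ := by
  rw [jacobiPhat, if_neg n.succ_ne_zero, Nat.add_sub_cancel]
  refine intervalIntegral.integral_congr_ae ?_
  filter_upwards [volume.ae_ne (1 : ℝ)] with ξ hξ _ using jacobiP_natCast_eq_eval m n hξ

theorem hasDerivAt_jacobiPhat (m n : ℕ) (x : ℝ) :
    HasDerivAt (jacobiPhat m (n + 1)) ((jacobiPoly m n).eval x) x := by
  rw [funext (jacobiPhat_natCast_succ m n)]
  exact (jacobiPoly m n).continuous.integral_hasStrictDerivAt (-1) x |>.hasDerivAt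

theorem jacobiPhat_neg_one (m n : ℕ) : jacobiPhat m (n + 1) (-1) = 0 := by
  rw [jacobiPhat_natCast_succ, intervalIntegral.integral_same]

end Rodrigues

section MomentsVanish

/-- `f` is continuous and its moments `∫_{-1}^1 f(x) (1 - x)^e dx` vanish for `a ≤ e < b`; that is,
`f` is orthogonal on `[-1, 1]` to the multiples of `(1 - x)^a` of degree less than `b`. -/
structure MomentsVanish (f : ℝ → ℝ) (a b : ℕ) : Prop where
  continuous : Continuous f
  integral_eq_zero : ∀ e, a ≤ e → e < b → ∫ x in (-1 : ℝ)..1, f x * (1 - x) ^ e = 0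

namespace MomentsVanish

variable {f g F : ℝ → ℝ} {a a' b b' : ℕ}

theorem mono (hf : MomentsVanish f a b) (ha : a ≤ a') (hb : b' ≤ b) : MomentsVanish f a' b' :=
  ⟨hf.continuous, fun e hae heb => hf.integral_eq_zero e (ha.trans hae) (heb.trans_le hb)⟩

theorem const_mul (c : ℝ) (hf : MomentsVanish f a b) : MomentsVanish (fun x => c * f x) a b := by
  refine ⟨hf.continuous.const_mul c, fun e hae heb => ?_⟩
  simp only [mul_assoc]
  rw [intervalIntegral.integral_const_mul, hf.integral_eq_zero e hae heb, mul_zero]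

theorem sub (hf : MomentsVanish f a b) (hg : MomentsVanish g a b) :
    MomentsVanish (fun x => f x - g x) a b := by
  have hf' := hf.continuous
  have hg' := hg.continuous
  refine ⟨hf'.sub hg', fun e hae heb => ?_⟩
  simp only [sub_mul]
  rw [intervalIntegral.integral_sub (Continuous.intervalIntegrable (by fun_prop) _ _)
    (Continuous.intervalIntegrable (by fun_prop) _ _), hf.integral_eq_zero e hae heb,
    hg.integral_eq_zero e hae heb, sub_zero]

theorem one_sub_mul (hf : MomentsVanish f a b) :
    MomentsVanish (fun x => (1 - x) * f x) (a - 1) (b - 1) := by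
  have hf' := hf.continuous
  refine ⟨by fun_prop, fun e hae heb => ?_⟩
  rw [← hf.integral_eq_zero (e + 1) (by lia) (by lia)]
  congr! 2 with x
  ring

theorem add_const_mul (c : ℝ) (hf : MomentsVanish f a b) :
    MomentsVanish (fun x => (x + c) * f x) a (b - 1) := by
  have decomposition : (fun x => (x + c) * f x) = fun x => (c + 1) * f x - (1 - x) * f x := by
    funext x
    ring
  rw [decomposition]
  exact ((hf.const_mul (c + 1)).mono le_rfl b.pred_le).sub
    (hf.one_sub_mul.mono a.pred_le le_rfl)

theorem add_const_pow_mul (c : ℝ) (n : ℕ) (hf : MomentsVanish f a b) :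
    MomentsVanish (fun x => (x + c) ^ n * f x) a (b - n) := by
  induction n with
  | zero => simpa using hf
  | succ n ih => simpa only [pow_succ', mul_assoc, Nat.sub_sub] using ih.add_const_mul c

/-- Integrate by parts: the boundary term vanishes at `-1` because of `F` and at `1` because of the
weight. -/
theorem antiderivative (hf : MomentsVanish f a b) (hF : ∀ x, HasDerivAt F (f x) x)
    (hF_neg_one : F (-1) = 0) : MomentsVanish F (a - 1) (b - 1) := by
  have hF_cont : Continuous F := continuous_iff_continuousAt.mpr fun x => (hF x).continuousAt
  refine ⟨hF_cont, fun e hae heb => ?_⟩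
  have weight_deriv (x : ℝ) :
      HasDerivAt (fun t : ℝ => (1 - t) ^ (e + 1)) (-((e + 1) * (1 - x) ^ e)) x := by
    simpa using ((hasDerivAt_id x).const_sub 1).fun_pow (e + 1)
  have by_parts := intervalIntegral.integral_mul_deriv_eq_deriv_mul (a := -1) (b := 1)
    (fun x _ => hF x) (fun x _ => weight_deriv x) (hf.continuous.intervalIntegrable _ _)
    (Continuous.intervalIntegrable (by fun_prop) _ _)
  rw [hf.integral_eq_zero (e + 1) (by lia) (by lia), hF_neg_one] at by_parts
  simp only [mul_neg, mul_left_comm (F _), intervalIntegral.integral_neg,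
    intervalIntegral.integral_const_mul] at by_parts
  have degree_ne_zero : (e : ℝ) + 1 ≠ 0 := by positivity
  simpa [degree_ne_zero] using by_parts

end MomentsVanish

theorem momentsVanish_jacobiPoly (m n : ℕ) :
    MomentsVanish (fun x => (jacobiPoly m n).eval x) m (m + n) := by
  refine ⟨(jacobiPoly m n).continuous, fun e hme hen => ?_⟩
  obtain ⟨d, rfl⟩ := Nat.exists_eq_add_of_le hme
  have dvd_at_one : (X - C 1 : ℝ[X]) ^ n ∣ (1 - X) ^ m * (X ^ 2 - 1) ^ n :=
    (pow_dvd_pow_of_dvd ⟨X + 1, by rw [C_1]; ring⟩ n).mul_left _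
  have dvd_at_neg_one : (X - C (-1) : ℝ[X]) ^ n ∣ (1 - X) ^ m * (X ^ 2 - 1) ^ n :=
    (pow_dvd_pow_of_dvd ⟨X - 1, by rw [C_neg, C_1]; ring⟩ n).mul_left _
  have natDegree_lt : ((1 - X : ℝ[X]) ^ d).natDegree < n :=
    (natDegree_pow_le_of_le (m := 1) d (by compute_degree)).trans_lt (by lia)
  have rodrigues (x : ℝ) : (jacobiPoly m n).eval x * (1 - x) ^ (m + d) =
      1 / (2 ^ n * (n.factorial : ℝ)) *
        ((derivative^[n] ((1 - X) ^ m * (X ^ 2 - 1) ^ n)).eval x *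
          ((1 - X) ^ d : ℝ[X]).eval x) := by
    have := congrArg (eval x) (one_sub_X_pow_mul_jacobiPoly m n)
    simp only [eval_mul, eval_pow, eval_sub, eval_one, eval_X, eval_C] at this ⊢
    linear_combination (1 - x) ^ d * this
  simp only [rodrigues]
  rw [intervalIntegral.integral_const_mul,
    intervalIntegral_iterate_derivative_mul n dvd_at_neg_one dvd_at_one,
    iterate_derivative_eq_zero natDegree_lt]
  simp

theorem momentsVanish_jacobiPhat (m n : ℕ) :
    MomentsVanish (jacobiPhat m (n + 1)) (m - 1) (m + n - 1) :=
  (momentsVanish_jacobiPoly m n).antiderivative (hasDerivAt_jacobiPhat m n)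
    (jacobiPhat_neg_one m n)

end MomentsVanish

section RegionIcc

variable {β : Type*} {t : Set β} {l u : β → ℝ}

/-- The points `(x, y)` with `y ∈ t` and `l y ≤ x ≤ u y`: Mathlib's `regionBetween` with closed
fibres and with the fibre coordinate first. -/
def regionIcc (t : Set β) (l u : β → ℝ) : Set (ℝ × β) :=
  {p | p.2 ∈ t ∧ p.1 ∈ Icc (l p.2) (u p.2)}

theorem mem_regionIcc {p : ℝ × β} :
    p ∈ regionIcc t l u ↔ p.2 ∈ t ∧ p.1 ∈ Icc (l p.2) (u p.2) :=
  Iff.rfl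

theorem integral_indicator_regionIcc (hlu : ∀ y ∈ t, l y ≤ u y) (f : ℝ × β → ℝ) (y : β) :
    ∫ x, (regionIcc t l u).indicator f (x, y) =
      t.indicator (fun y => ∫ x in l y..u y, f (x, y)) y := by
  by_cases hy : y ∈ t
  · have slice : (fun x => (regionIcc t l u).indicator f (x, y)) =
        (Icc (l y) (u y)).indicator fun x => f (x, y) := by
      classical
      funext x
      simp only [indicator_apply, mem_regionIcc, hy, true_and]
    rw [slice, integral_indicator measurableSet_Icc, integral_Icc_eq_integral_Ioc,
      ← intervalIntegral.integral_of_le (hlu y hy), indicator_of_mem hy]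
  · have notMem (x : ℝ) : (x, y) ∉ regionIcc t l u := fun hxy => hy hxy.1
    simp only [indicator_of_notMem (notMem _), indicator_of_notMem hy, integral_zero]

variable [MeasurableSpace β] {ν : Measure β} [SFinite ν] {f : ℝ × β → ℝ}

theorem measurableSet_regionIcc (ht : MeasurableSet t) (hl : Measurable l) (hu : Measurable u) :
    MeasurableSet (regionIcc t l u) :=
  (ht.preimage measurable_snd).inter
    ((measurableSet_le (hl.comp measurable_snd) measurable_fst).inter
      (measurableSet_le measurable_fst (hu.comp measurable_snd)))

theorem integrableOn_intervalIntegral_of_regionIcc (ht : MeasurableSet t) (hl : Measurable l)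
    (hu : Measurable u) (hlu : ∀ y ∈ t, l y ≤ u y)
    (hf : IntegrableOn f (regionIcc t l u) (volume.prod ν)) :
    IntegrableOn (fun y => ∫ x in l y..u y, f (x, y)) t ν := by
  have := (hf.integrable_indicator (measurableSet_regionIcc ht hl hu)).integral_prod_right
  simp only [integral_indicator_regionIcc hlu] at this
  exact (integrable_indicator_iff ht).mp this

theorem setIntegral_regionIcc (ht : MeasurableSet t) (hl : Measurable l) (hu : Measurable u)
    (hlu : ∀ y ∈ t, l y ≤ u y) (hf : IntegrableOn f (regionIcc t l u) (volume.prod ν)) :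
    ∫ p in regionIcc t l u, f p ∂(volume.prod ν) = ∫ y in t, (∫ x in l y..u y, f (x, y)) ∂ν := by
  have region_meas := measurableSet_regionIcc ht hl hu
  rw [← integral_indicator region_meas,
    integral_prod_symm _ (hf.integrable_indicator region_meas)]
  simp only [integral_indicator_regionIcc hlu]
  exact integral_indicator ht

end RegionIcc

section RefTet

theorem isCompact_refTet : IsCompact refTet := by
  have subset_box : refTet ⊆ Icc ((-1 : ℝ), (0 : ℝ), (0 : ℝ)) ((1 : ℝ), (1 : ℝ), (1 : ℝ)) := by
    rintro ⟨x, y, z⟩ ⟨hz0, hz1, hy0, hy1, hx⟩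
    dsimp only at hz0 hz1 hy0 hy1 hx
    obtain ⟨hx0, hx1⟩ := abs_le.mp hx
    refine ⟨⟨?_, hy0, hz0⟩, ⟨?_, ?_, hz1⟩⟩ <;> dsimp only <;> linarith
  refine isCompact_Icc.of_isClosed_subset ?_ subset_box
  simp only [refTet, ofPred_and]
  iterate 4 refine (isClosed_le (by fun_prop) (by fun_prop)).inter ?_
  exact isClosed_le (by fun_prop) (by fun_prop)

theorem refTet_eq_regionIcc :
    refTet = regionIcc (regionIcc (Icc 0 1) (fun _ => 0) fun z => 1 - z)
      (fun q => -(1 - q.1 - q.2)) fun q => 1 - q.1 - q.2 := by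
  ext p
  simp only [refTet, mem_regionIcc, mem_ofPred_eq, mem_Icc, abs_le]
  tauto

theorem setIntegral_refTet {F : ℝ × ℝ × ℝ → ℝ} (hF : IntegrableOn F refTet) :
    ∫ p in refTet, F p =
      ∫ z in (0 : ℝ)..1, ∫ y in (0 : ℝ)..1 - z, ∫ x in -(1 - y - z)..1 - y - z, F (x, y, z) := by
  have triangle_meas : MeasurableSet (regionIcc (Icc 0 1) (fun _ => 0) fun z : ℝ => 1 - z) :=
    measurableSet_regionIcc measurableSet_Icc (by fun_prop) (by fun_prop)
  have triangle_le : ∀ z ∈ Icc (0 : ℝ) 1, 0 ≤ 1 - z := fun z hz => sub_nonneg.mpr hz.2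
  have fibre_le : ∀ q ∈ regionIcc (Icc 0 1) (fun _ => 0) fun z : ℝ => 1 - z,
      -(1 - q.1 - q.2) ≤ 1 - q.1 - q.2 := fun q hq => by linarith [hq.2.2]
  rw [refTet_eq_regionIcc] at hF ⊢
  calc
    _ = ∫ q in regionIcc (Icc 0 1) (fun _ => 0) fun z : ℝ => 1 - z,
          ∫ x in -(1 - q.1 - q.2)..1 - q.1 - q.2, F (x, q) :=
      setIntegral_regionIcc triangle_meas (by fun_prop) (by fun_prop) fibre_le hF
    _ = ∫ z in Icc (0 : ℝ) 1, ∫ y in (0 : ℝ)..1 - z,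
          ∫ x in -(1 - y - z)..1 - y - z, F (x, y, z) :=
      setIntegral_regionIcc measurableSet_Icc (by fun_prop) (by fun_prop) triangle_le
        (integrableOn_intervalIntegral_of_regionIcc triangle_meas (by fun_prop) (by fun_prop)
          fibre_le hF)
    _ = _ := by
      rw [integral_Icc_eq_integral_Ioc, ← intervalIntegral.integral_of_le zero_le_one]

theorem ae_fst_ne {β : Type*} [MeasurableSpace β] {ν : Measure β} [SFinite ν] {g : β → ℝ}
    (hg : Measurable g) : ∀ᵐ p : ℝ × β ∂volume.prod ν, p.1 ≠ g p.2 := by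
  have graph_meas : MeasurableSet {p : ℝ × β | p.1 ≠ g p.2} :=
    (measurableSet_eq_fun measurable_fst (hg.comp measurable_snd)).compl
  have swapped : ∀ᵐ q ∂ν.prod (volume : Measure ℝ), q.2 ≠ g q.1 :=
    (Measure.ae_prod_iff_ae_ae (graph_meas.preimage measurable_swap)).mpr
      (.of_forall fun y => volume.ae_ne (g y))
  exact Measure.measurePreserving_swap.quasiMeasurePreserving.ae swapped

theorem ae_restrict_refTet_pos : ∀ᵐ p ∂volume.restrict refTet, 0 < 1 - p.2.1 - p.2.2 := by
  have ne_zero : ∀ᵐ p : ℝ × ℝ × ℝ, p.2.1 ≠ 1 - p.2.2 :=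
    Measure.quasiMeasurePreserving_snd.ae (ae_fst_ne (ν := volume) (by fun_prop))
  filter_upwards [ae_restrict_of_ae ne_zero, ae_restrict_mem isCompact_refTet.measurableSet]
    with p hp ⟨_, _, _, hy, _⟩
  linarith [lt_of_le_of_ne hy hp]

end RefTet

section DuffyProd

/-- Functions that separate in the collapsed (Duffy) coordinates
`(x / (1 - y - z), (2 y + z - 1) / (1 - z), z) ∈ [-1, 1]² × [0, 1]` of the reference tetrahedron,
up to a power of `1 - y - z`. -/
noncomputable def duffyProd (a : ℕ) (f g h : ℝ → ℝ) (p : ℝ × ℝ × ℝ) : ℝ :=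
  (1 - p.2.1 - p.2.2) ^ a * f (p.1 / (1 - p.2.1 - p.2.2)) *
    g ((2 * p.2.1 + p.2.2 - 1) / (1 - p.2.2)) * h p.2.2

variable {f g h : ℝ → ℝ} {a : ℕ}

theorem duffy_coords_mem_Icc {p : ℝ × ℝ × ℝ} (hp : p ∈ refTet) :
    p.1 / (1 - p.2.1 - p.2.2) ∈ Icc (-1 : ℝ) 1 ∧
      (2 * p.2.1 + p.2.2 - 1) / (1 - p.2.2) ∈ Icc (-1 : ℝ) 1 := by
  obtain ⟨x, y, z⟩ := p
  obtain ⟨hz0, hz1, hy0, hy1, hx⟩ := hp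
  dsimp only at hz0 hz1 hy0 hy1 hx ⊢
  simp only [← abs_le, mem_Icc, abs_div]
  refine ⟨div_le_one_of_le₀ (hx.trans (le_abs_self _)) (abs_nonneg _),
    div_le_one_of_le₀ (le_trans ?_ (le_abs_self _)) (abs_nonneg _)⟩
  rw [abs_le]
  constructor <;> linarith

theorem integrableOn_duffyProd (hf : Continuous f) (hg : Continuous g) (hh : Continuous h) :
    IntegrableOn (duffyProd a f g h) refTet := by
  obtain ⟨Mf, hMf⟩ :=
    (isCompact_Icc (a := (-1 : ℝ)) (b := 1)).exists_bound_of_continuousOn hf.continuousOn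
  obtain ⟨Mg, hMg⟩ :=
    (isCompact_Icc (a := (-1 : ℝ)) (b := 1)).exists_bound_of_continuousOn hg.continuousOn
  have weight_integrable : IntegrableOn
      (fun p : ℝ × ℝ × ℝ => (1 - p.2.1 - p.2.2) ^ a * h p.2.2) refTet :=
    (Continuous.continuousOn (by fun_prop)).integrableOn_compact isCompact_refTet
  have hp := ae_restrict_mem (μ := volume) isCompact_refTet.measurableSet
  have hf_meas : Measurable fun p : ℝ × ℝ × ℝ => f (p.1 / (1 - p.2.1 - p.2.2)) :=
    hf.measurable.comp (by fun_prop)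
  have hg_meas : Measurable fun p : ℝ × ℝ × ℝ => g ((2 * p.2.1 + p.2.2 - 1) / (1 - p.2.2)) :=
    hg.measurable.comp (by fun_prop)
  have hf_bound := hp.mono fun p hp => hMf _ (duffy_coords_mem_Icc hp).1
  have hg_bound := hp.mono fun p hp => hMg _ (duffy_coords_mem_Icc hp).2
  have prod_integrable :=
    (weight_integrable.bdd_mul hf_meas.aestronglyMeasurable hf_bound).bdd_mul
      hg_meas.aestronglyMeasurable hg_bound
  refine prod_integrable.congr (.of_forall fun p => ?_)
  simp only [duffyProd]
  ring

theorem integral_pow_mul_comp_div (f : ℝ → ℝ) (a : ℕ) (s : ℝ) :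
    ∫ x in -s..s, s ^ a * f (x / s) = s ^ (a + 1) * ∫ t in (-1 : ℝ)..1, f t := by
  rcases eq_or_ne s 0 with rfl | hs
  · simp
  · rw [intervalIntegral.integral_const_mul, intervalIntegral.integral_comp_div f hs, neg_div,
      div_self hs, smul_eq_mul]
    ring

theorem integral_sub_pow_mul_comp (g : ℝ → ℝ) (a : ℕ) (w : ℝ) :
    ∫ y in (0 : ℝ)..w, (w - y) ^ a * g ((2 * y - w) / w) =
      (w / 2) ^ (a + 1) * ∫ t in (-1 : ℝ)..1, g t * (1 - t) ^ a := by
  rcases eq_or_ne w 0 with rfl | hw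
  · simp
  · have rescale (y : ℝ) : (w - y) ^ a * g ((2 * y - w) / w) =
        (w / 2) ^ a * (g (y / (w / 2) - 1) * (1 - (y / (w / 2) - 1)) ^ a) := by
      have base_eq : w - y = w / 2 * (1 - (y / (w / 2) - 1)) := by
        field_simp
        ring
      have arg_eq : (2 * y - w) / w = y / (w / 2) - 1 := by field_simp
      rw [arg_eq, base_eq, mul_pow]
      ring
    simp only [rescale]
    rw [intervalIntegral.integral_const_mul, intervalIntegral.integral_comp_div_sub
      (fun t => g t * (1 - t) ^ a) (by positivity : w / 2 ≠ 0), smul_eq_mul]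
    have upper : w / (w / 2) - 1 = 1 := by field_simp; norm_num
    rw [upper, zero_div, zero_sub]
    ring

theorem setIntegral_duffyProd (hf : Continuous f) (hg : Continuous g) (hh : Continuous h) :
    ∫ p in refTet, duffyProd a f g h p =
      (∫ t in (-1 : ℝ)..1, f t) * (∫ t in (-1 : ℝ)..1, g t * (1 - t) ^ (a + 1)) *
        ∫ z in (0 : ℝ)..1, ((1 - z) / 2) ^ (a + 2) * h z := by
  have x_integral (y z : ℝ) : ∫ x in -(1 - y - z)..1 - y - z, duffyProd a f g h (x, y, z) =
      (1 - z - y) ^ (a + 1) * g ((2 * y - (1 - z)) / (1 - z)) *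
        ((∫ t in (-1 : ℝ)..1, f t) * h z) := by
    simp only [duffyProd]
    rw [intervalIntegral.integral_mul_const, intervalIntegral.integral_mul_const,
      integral_pow_mul_comp_div, sub_right_comm 1 y z, sub_sub_eq_add_sub]
    ring
  rw [setIntegral_refTet (integrableOn_duffyProd hf hg hh), ← intervalIntegral.integral_const_mul]
  refine intervalIntegral.integral_congr fun z _ => ?_
  simp only [x_integral]
  rw [intervalIntegral.integral_mul_const, integral_sub_pow_mul_comp]
  ring

theorem duffyProd_mul_monomial (l m n : ℕ) {p : ℝ × ℝ × ℝ} (hp : p ∈ refTet) :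
    duffyProd a f g h p * (p.1 ^ l * p.2.1 ^ m * p.2.2 ^ n) =
      duffyProd (a + l) (fun t => t ^ l * f t) (fun t => (t + 1) ^ m * g t)
        (fun z => ((1 - z) / 2) ^ m * z ^ n * h z) p := by
  obtain ⟨x, y, z⟩ := p
  obtain ⟨hz0, hz1, hy0, hy1, hx⟩ := hp
  dsimp only at hz0 hz1 hy0 hy1 hx
  have hx_eq : x = (1 - y - z) * (x / (1 - y - z)) := by
    rcases eq_or_ne (1 - y - z) 0 with hs | hs
    · simpa [hs] using hx
    · field_simp
  have hy_eq : y = (1 - z) / 2 * ((2 * y + z - 1) / (1 - z) + 1) := by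
    rcases eq_or_ne (1 - z) 0 with hw | hw
    · simp only [hw, zero_div, zero_mul]
      linarith
    · field_simp
      ring
  have hx_pow := congrArg (· ^ l) hx_eq
  have hy_pow := congrArg (· ^ m) hy_eq
  simp only [mul_pow] at hx_pow hy_pow
  simp only [duffyProd]
  rw [hx_pow, hy_pow]
  ring

theorem setIntegral_duffyProd_mul_monomial_eq_zero {A B D : ℕ} (hf : MomentsVanish f 0 A)
    (hg : MomentsVanish g B D) (hh : Continuous h) (hB : B ≤ a + A + 1) {l m : ℕ}
    (hlm : l + m + a + 1 < D) (n : ℕ) :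
    ∫ p in refTet, duffyProd a f g h p * (p.1 ^ l * p.2.1 ^ m * p.2.2 ^ n) = 0 := by
  have hf' := hf.continuous
  have hg' := hg.continuous
  rw [setIntegral_congr_fun isCompact_refTet.measurableSet
    fun p hp => duffyProd_mul_monomial l m n hp,
    setIntegral_duffyProd (by fun_prop) (by fun_prop) (by fun_prop)]
  rcases lt_or_ge l A with hl | hl
  · have := (hf.add_const_pow_mul 0 l).integral_eq_zero 0 le_rfl (by lia)
    simp only [add_zero, pow_zero, mul_one] at this
    rw [this, zero_mul, zero_mul]
  · rw [(hg.add_const_pow_mul 1 m).integral_eq_zero (a + l + 1) (by lia) (by lia), mul_zero,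
      zero_mul]

theorem continuous_eval_coords (q : MvPolynomial (Fin 3) ℝ) :
    Continuous fun p : ℝ × ℝ × ℝ => MvPolynomial.eval ![p.1, p.2.1, p.2.2] q :=
  (MvPolynomial.continuous_eval q).comp (by fun_prop)

theorem integrableOn_duffyProd_mul_eval (hf : Continuous f) (hg : Continuous g)
    (hh : Continuous h) (q : MvPolynomial (Fin 3) ℝ) :
    IntegrableOn (fun p => duffyProd a f g h p * MvPolynomial.eval ![p.1, p.2.1, p.2.2] q)
      refTet :=
  (integrableOn_duffyProd hf hg hh).mul_continuousOn (continuous_eval_coords q).continuousOn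
    isCompact_refTet

theorem setIntegral_duffyProd_mul_eval_eq_zero {A B D : ℕ} (hf : MomentsVanish f 0 A)
    (hg : MomentsVanish g B D) (hh : Continuous h) (hB : B ≤ a + A + 1)
    {q : MvPolynomial (Fin 3) ℝ} (hq : ∀ d ∈ q.support, d 0 + d 1 + a + 1 < D) :
    ∫ p in refTet, duffyProd a f g h p * MvPolynomial.eval ![p.1, p.2.1, p.2.2] q = 0 := by
  have expansion (p : ℝ × ℝ × ℝ) :
      duffyProd a f g h p * MvPolynomial.eval ![p.1, p.2.1, p.2.2] q =
        ∑ d ∈ q.support, q.coeff d *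
          (duffyProd a f g h p * (p.1 ^ d 0 * p.2.1 ^ d 1 * p.2.2 ^ d 2)) := by
    simp only [MvPolynomial.eval_eq', Finset.mul_sum, Fin.prod_univ_three, Matrix.cons_val,
      mul_left_comm]
  have monomial_integrable (d : Fin 3 →₀ ℕ) : IntegrableOn
      (fun p => duffyProd a f g h p * (p.1 ^ d 0 * p.2.1 ^ d 1 * p.2.2 ^ d 2)) refTet :=
    (integrableOn_duffyProd hf.continuous hg.continuous hh).mul_continuousOn
      (Continuous.continuousOn (by fun_prop)) isCompact_refTet
  simp only [expansion]
  rw [integral_finsetSum _ fun d _ => (monomial_integrable d).const_mul _]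
  refine Finset.sum_eq_zero fun d hd => ?_
  rw [integral_const_mul, setIntegral_duffyProd_mul_monomial_eq_zero hf hg hh hB (hq d hd),
    mul_zero]

end DuffyProd

section FaceFunctions

theorem hasDerivAt_comp_div_mul_pow {F g s : ℝ → ℝ} {F' g' s' r : ℝ} (n : ℕ)
    (hF : HasDerivAt F F' (g r / s r)) (hg : HasDerivAt g g' r) (hs : HasDerivAt s s' r)
    (hsr : s r ≠ 0) :
    HasDerivAt (fun r => F (g r / s r) * s r ^ (n + 1))
      (s r ^ n * (F' * (g' - g r / s r * s') + (n + 1) * F (g r / s r) * s')) r := by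
  refine ((hF.comp r (hg.div hs hsr)).mul (hs.fun_pow (n + 1))).congr_deriv ?_
  simp only [Function.comp_apply, Pi.div_apply, Nat.add_sub_cancel]
  push_cast
  field_simp
  ring

/-- The factor `U` in `∂_y u_{i+1} = ∂_z u_{i+1} = -s^i U(x / s)`, where `s = 1 - y - z`. -/
noncomputable def uTransverse (i : ℕ) (t : ℝ) : ℝ :=
  (i + 1) * jacobiPhat (0 : ℕ) (i + 1) t - t * (jacobiPoly 0 i).eval t

/-- The factor `V` in `∂_z v = w^j V((2 y + z - 1) / w)`, where `w = 1 - z` and `v` is built from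
the integrated Jacobi polynomial `p̂_{j+1}^m`. -/
noncomputable def vTransverse (m j : ℕ) (t : ℝ) : ℝ :=
  (t + 1) * (jacobiPoly m j).eval t - (j + 1) * jacobiPhat m (j + 1) t

theorem momentsVanish_uTransverse (i : ℕ) : MomentsVanish (uTransverse i) 0 (i - 1) := by
  have := ((momentsVanish_jacobiPhat 0 i).const_mul (i + 1)).sub
    ((momentsVanish_jacobiPoly 0 i).add_const_mul 0)
  simp only [add_zero, zero_add] at this
  exact this

theorem momentsVanish_vTransverse (m j : ℕ) :
    MomentsVanish (vTransverse m j) m (m + j - 1) :=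
  ((momentsVanish_jacobiPoly m j).add_const_mul 1).sub
    (((momentsVanish_jacobiPhat m j).const_mul (j + 1)).mono m.pred_le le_rfl)

theorem momentsVanish_vTransverse_sub (m j : ℕ) :
    MomentsVanish (fun t => vTransverse m j t - 2 * (jacobiPoly m j).eval t)
      (m - 1) (m + j - 1) := by
  have decomposition : (fun t => vTransverse m j t - 2 * (jacobiPoly m j).eval t) = fun t =>
      -1 * ((1 - t) * (jacobiPoly m j).eval t) - (j + 1) * jacobiPhat m (j + 1) t := by
    funext t
    simp only [vTransverse]
    ring
  rw [decomposition]
  exact ((momentsVanish_jacobiPoly m j).one_sub_mul.const_mul (-1)).sub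
    ((momentsVanish_jacobiPhat m j).const_mul (j + 1))

theorem grad3_uFun (i : ℕ) {p : ℝ × ℝ × ℝ} (hp : 1 - p.2.1 - p.2.2 ≠ 0) :
    grad3 (uFun (i + 1)) p =
      ((1 - p.2.1 - p.2.2) ^ i * (jacobiPoly 0 i).eval (p.1 / (1 - p.2.1 - p.2.2)),
       -((1 - p.2.1 - p.2.2) ^ i * uTransverse i (p.1 / (1 - p.2.1 - p.2.2))),
       -((1 - p.2.1 - p.2.2) ^ i * uTransverse i (p.1 / (1 - p.2.1 - p.2.2)))) := by
  obtain ⟨x, y, z⟩ := p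
  have hH := hasDerivAt_jacobiPhat 0 i (x / (1 - y - z))
  have hx := hasDerivAt_comp_div_mul_pow i hH (hasDerivAt_id x) (hasDerivAt_const x (1 - y - z)) hp
  have hy := hasDerivAt_comp_div_mul_pow i hH (hasDerivAt_const y x)
    (((hasDerivAt_id y).const_sub 1).sub_const z) hp
  have hz := hasDerivAt_comp_div_mul_pow i hH (hasDerivAt_const z x)
    ((hasDerivAt_id z).const_sub (1 - y)) hp
  simp only [Nat.cast_zero] at hx hy hz
  refine Prod.ext (hx.deriv.trans ?_) (Prod.ext (hy.deriv.trans ?_) (hz.deriv.trans ?_)) <;>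
  · simp only [uTransverse, id, Nat.cast_zero]
    ring

theorem grad3_vFun {i m : ℕ} (hm : 2 * (i : ℝ) - 1 = m) (j : ℕ) {p : ℝ × ℝ × ℝ}
    (hp : 1 - p.2.2 ≠ 0) :
    grad3 (vFun i (j + 1)) p =
      (0,
       (1 - p.2.2) ^ j * (2 * (jacobiPoly m j).eval ((2 * p.2.1 + p.2.2 - 1) / (1 - p.2.2))),
       (1 - p.2.2) ^ j * vTransverse m j ((2 * p.2.1 + p.2.2 - 1) / (1 - p.2.2))) := by
  obtain ⟨x, y, z⟩ := p
  have hH := hasDerivAt_jacobiPhat m j ((2 * y + z - 1) / (1 - z))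
  have hy := hasDerivAt_comp_div_mul_pow j hH
    ((((hasDerivAt_id y).const_mul 2).add_const z).sub_const 1) (hasDerivAt_const y (1 - z)) hp
  have hz := hasDerivAt_comp_div_mul_pow j hH (((hasDerivAt_id z).const_add (2 * y)).sub_const 1)
    ((hasDerivAt_id z).const_sub 1) hp
  rw [← hm] at hy hz
  have hx := hasDerivAt_const x (vFun i (j + 1) (0, y, z))
  refine Prod.ext hx.deriv (Prod.ext (hy.deriv.trans ?_) (hz.deriv.trans ?_)) <;>
  · simp only [vTransverse, id, ← hm]
    ring

theorem phiFace_ae_eq_duffyProd (i j : ℕ) :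
    ∀ᵐ p ∂volume.restrict refTet, phiFace i j p =
      (duffyProd i (uTransverse i)
        (fun t => vTransverse (2 * i + 1) j t - 2 * (jacobiPoly (2 * i + 1) j).eval t)
        (fun z => (1 - z) ^ j) p,
       duffyProd i (fun t => (jacobiPoly 0 i).eval t) (vTransverse (2 * i + 1) j)
        (fun z => (1 - z) ^ j) p,
       duffyProd i (fun t => (jacobiPoly 0 i).eval t)
        (fun t => (jacobiPoly (2 * i + 1) j).eval t) (fun z => -2 * (1 - z) ^ j) p) := by
  have parameter_eq : 2 * ((i + 1 : ℕ) : ℝ) - 1 = (2 * i + 1 : ℕ) := by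
    push_cast
    ring
  filter_upwards [ae_restrict_refTet_pos, ae_restrict_mem isCompact_refTet.measurableSet]
    with p hs ⟨_, _, hy, _⟩
  have hw : 0 < 1 - p.2.2 := by linarith
  rw [phiFace, grad3_uFun i hs.ne', grad3_vFun parameter_eq j hw.ne']
  ext <;>
  · simp only [cross3, duffyProd, Prod.fst_neg, Prod.snd_neg]
    ring

theorem integral_dot3_eq_zero {α : Type*} [MeasurableSpace α] {μ : Measure α}
    {F : α → ℝ × ℝ × ℝ} {F₁ F₂ F₃ Q₁ Q₂ Q₃ : α → ℝ}
    (hF : ∀ᵐ p ∂μ, F p = (F₁ p, F₂ p, F₃ p))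
    (hint₁ : Integrable (fun p => F₁ p * Q₁ p) μ) (hint₂ : Integrable (fun p => F₂ p * Q₂ p) μ)
    (hint₃ : Integrable (fun p => F₃ p * Q₃ p) μ) (hzero₁ : ∫ p, F₁ p * Q₁ p ∂μ = 0)
    (hzero₂ : ∫ p, F₂ p * Q₂ p ∂μ = 0) (hzero₃ : ∫ p, F₃ p * Q₃ p ∂μ = 0) :
    ∫ p, dot3 (F p) (Q₁ p, Q₂ p, Q₃ p) ∂μ = 0 := by
  have dot3_eq : (fun p => dot3 (F p) (Q₁ p, Q₂ p, Q₃ p)) =ᵐ[μ]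
      fun p => F₁ p * Q₁ p + F₂ p * Q₂ p + F₃ p * Q₃ p := by
    filter_upwards [hF] with p hp
    rw [hp, dot3]
  rw [integral_congr_ae dot3_eq, integral_add (hint₁.fun_add hint₂) hint₃, integral_add hint₁ hint₂,
    hzero₁, hzero₂, hzero₃, add_zero, add_zero]

theorem degree_fst_snd_le_totalDegree {q : MvPolynomial (Fin 3) ℝ} {d : Fin 3 →₀ ℕ}
    (hd : d ∈ q.support) : d 0 + d 1 ≤ q.totalDegree := by
  have := MvPolynomial.le_totalDegree hd
  rw [Finsupp.sum_fintype _ _ fun _ => rfl, Fin.sum_univ_three] at this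
  lia

theorem phiFace_orthogonal_to_low_order_general (i j : ℕ) (q₁ q₂ q₃ : MvPolynomial (Fin 3) ℝ)
    (h₁ : ∀ d ∈ q₁.support, d 0 + d 1 + 2 ≤ i + j)
    (h₂ : ∀ d ∈ q₂.support, d 0 + d 1 + 2 ≤ i + j)
    (h₃ : ∀ d ∈ q₃.support, d 0 + d 1 + 1 ≤ i + j) :
    ∫ p in refTet,
        dot3 (phiFace i j p)
          (MvPolynomial.eval ![p.1, p.2.1, p.2.2] q₁,
           MvPolynomial.eval ![p.1, p.2.1, p.2.2] q₂,
           MvPolynomial.eval ![p.1, p.2.1, p.2.2] q₃) = 0 := by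
  have hP : MomentsVanish (fun t => (jacobiPoly 0 i).eval t) 0 i := by
    simpa only [zero_add] using momentsVanish_jacobiPoly 0 i
  have hR := momentsVanish_jacobiPoly (2 * i + 1) j
  have hU := momentsVanish_uTransverse i
  have hV := momentsVanish_vTransverse (2 * i + 1) j
  have hW := momentsVanish_vTransverse_sub (2 * i + 1) j
  refine integral_dot3_eq_zero (phiFace_ae_eq_duffyProd i j)
    (integrableOn_duffyProd_mul_eval hU.continuous hW.continuous (by fun_prop) q₁)
    (integrableOn_duffyProd_mul_eval hP.continuous hV.continuous (by fun_prop) q₂)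
    (integrableOn_duffyProd_mul_eval hP.continuous hR.continuous (by fun_prop) q₃)
    (setIntegral_duffyProd_mul_eval_eq_zero hU hW (by fun_prop) (by lia) fun d hd => ?_)
    (setIntegral_duffyProd_mul_eval_eq_zero hP hV (by fun_prop) (by lia) fun d hd => ?_)
    (setIntegral_duffyProd_mul_eval_eq_zero hP hR (by fun_prop) (by lia) fun d hd => ?_)
  · have := h₁ d hd
    lia
  · have := h₂ d hd
    lia
  · have := h₃ d hd
    lia

end FaceFunctions

/-- The highest-order face basis function `φ_{ij}` with `i + j = k`, `i ≥ 1`, is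
`L²(T̂₃)`-orthogonal to all vector-valued polynomials of total degree at most `k - 2`. -/
theorem phiFace_orthogonal_to_low_order (k i j : ℕ) (hi : 1 ≤ i) (hij : i + j = k)
    (q₁ q₂ q₃ : MvPolynomial (Fin 3) ℝ)
    (h₁ : (q₁.totalDegree : ℤ) ≤ (k : ℤ) - 2)
    (h₂ : (q₂.totalDegree : ℤ) ≤ (k : ℤ) - 2)
    (h₃ : (q₃.totalDegree : ℤ) ≤ (k : ℤ) - 2) :
    ∫ p in refTet,
        dot3 (phiFace i j p)
          (MvPolynomial.eval ![p.1, p.2.1, p.2.2] q₁,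
           MvPolynomial.eval ![p.1, p.2.1, p.2.2] q₂,
           MvPolynomial.eval ![p.1, p.2.1, p.2.2] q₃) = 0 := by
  refine phiFace_orthogonal_to_low_order_general i j q₁ q₂ q₃ ?_ ?_ ?_ <;> intro d hd <;>
    have := degree_fst_snd_le_totalDegree hd <;> lia
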